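/- The algebra homomorphism H_n → End_{U_q(gl(1|1))}(V^{⊗n}) defined by H_i ↦ Ȟ_i is surjective; that is, every ℂ(q)-linear endomorphism of V^{⊗n} commuting with the actions of E, F and all q^h lies in the unital subalgebra generated by Ȟ_1,...,Ȟ_{n-1}. -/

import Mathlib

open scoped Classical

set_option maxHeartbeats 1000000
set_option synthInstance.maxHeartbeats 200000

noncomputable section

abbrev K : Type := RatFunc ℂ

noncomputable def q : K := RatFunc.X

/-- The quantum integer `[k] = (q^k - q^{-k})/(q - q^{-1})`. -/
noncomputable def qnum (k : ℕ) : K := (q ^ k - q⁻¹ ^ k) / (q - q⁻¹)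

/-- The quantum factorial `[k]! = [k][k-1]⋯[1]`. -/
noncomputable def qfact : ℕ → K
  | 0 => 1
  | k + 1 => qnum (k + 1) * qfact k

/-- The underlying vector space of `V(a_1) ⊗ ⋯ ⊗ V(a_n)`, with standard basis indexed by
sequences `η ∈ {0,1}^n`. -/
abbrev V (n : ℕ) : Type := (Fin n → Fin 2) → K

/-- The standard basis vector `v_η`. -/
noncomputable def eb {n : ℕ} (η : Fin n → Fin 2) : V n := fun γ => if γ = η then 1 else 0

/-- The number of `1`s in `γ` strictly before position `i` (the Koszul sign exponent). -/
def onesBefore {n : ℕ} (γ : Fin n → Fin 2) (i : Fin n) : ℕ :=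
  (Finset.univ.filter (fun k => k < i ∧ γ k = 1)).card

/-- The action of `E` on `V(a_1) ⊗ ⋯ ⊗ V(a_n)` (via the iterated comultiplication
`Δ(E) = E ⊗ K⁻¹ + 1 ⊗ E`, with the Koszul sign rule). -/
noncomputable def Eop (a : ℕ → ℕ) (n : ℕ) : Module.End K (V n) where
  toFun f := fun γ => ∑ i : Fin n,
    if γ i = 0 then
      ((-1 : K) ^ onesBefore γ i) * qnum (a i)
        * q ^ (-((∑ j ∈ Finset.univ.filter (fun j => i < j), a j : ℕ) : ℤ))
        * f (Function.update γ i 1)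
    else 0
  map_add' f g := by
    funext γ
    simp only [Pi.add_apply, ← Finset.sum_add_distrib]
    refine Finset.sum_congr rfl fun i _ => ?_
    split_ifs <;> ring
  map_smul' c f := by
    funext γ
    simp only [Pi.smul_apply, smul_eq_mul, RingHom.id_apply, Finset.mul_sum]
    refine Finset.sum_congr rfl fun i _ => ?_
    split_ifs <;> ring

/-- The action of `F` on `V(a_1) ⊗ ⋯ ⊗ V(a_n)` (via the iterated comultiplication
`Δ(F) = F ⊗ 1 + K ⊗ F`, with the Koszul sign rule). -/
noncomputable def Fop (a : ℕ → ℕ) (n : ℕ) : Module.End K (V n) where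
  toFun f := fun γ => ∑ i : Fin n,
    if γ i = 1 then
      ((-1 : K) ^ onesBefore γ i)
        * q ^ (∑ j ∈ Finset.univ.filter (fun j => j < i), a j)
        * f (Function.update γ i 0)
    else 0
  map_add' f g := by
    funext γ
    simp only [Pi.add_apply, ← Finset.sum_add_distrib]
    refine Finset.sum_congr rfl fun i _ => ?_
    split_ifs <;> ring
  map_smul' c f := by
    funext γ
    simp only [Pi.smul_apply, smul_eq_mul, RingHom.id_apply, Finset.mul_sum]
    refine Finset.sum_congr rfl fun i _ => ?_
    split_ifs <;> ring

/-- The action of `q^h` for `h = c·h₁ + d·h₂` on `V(a_1) ⊗ ⋯ ⊗ V(a_n)`: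
the basis vector `v^{a_i}_0` has weight `a_i ε₁` and `v^{a_i}_1` has weight
`(a_i - 1) ε₁ + ε₂`. -/
noncomputable def Kop (a : ℕ → ℕ) (n : ℕ) (c d : ℤ) : Module.End K (V n) where
  toFun f := fun γ =>
    q ^ (∑ i : Fin n, (if γ i = 0 then c * (a i : ℤ) else c * ((a i : ℤ) - 1) + d)) * f γ
  map_add' f g := by
    funext γ
    simp only [Pi.add_apply]
    ring
  map_smul' c' f := by
    funext γ
    simp only [Pi.smul_apply, smul_eq_mul, RingHom.id_apply]
    ring

/-- The endomorphism `Ȟ_i` of `V^{⊗n}` (acting on the `i`-th and `(i+1)`-st tensor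
factors, 0-based). -/
noncomputable def Hop (n : ℕ) (i : ℕ) (hi : i + 1 < n) : Module.End K (V n) where
  toFun f := fun γ =>
    if γ ⟨i, by omega⟩ = 0 ∧ γ ⟨i + 1, hi⟩ = 0 then q⁻¹ * f γ
    else if γ ⟨i, by omega⟩ = 1 ∧ γ ⟨i + 1, hi⟩ = 1 then (-q) * f γ
    else if γ ⟨i, by omega⟩ = 0 ∧ γ ⟨i + 1, hi⟩ = 1 then
      f (fun k => γ (Equiv.swap ⟨i, by omega⟩ ⟨i + 1, hi⟩ k))
    else (q⁻¹ - q) * f γ + f (fun k => γ (Equiv.swap ⟨i, by omega⟩ ⟨i + 1, hi⟩ k))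
  map_add' f g := by
    funext γ
    simp only [Pi.add_apply]
    split_ifs <;> ring
  map_smul' c f := by
    funext γ
    simp only [Pi.smul_apply, smul_eq_mul, RingHom.id_apply]
    split_ifs <;> ring

/-- The constant sequence `(1,1,…)`: all tensor factors are the vector representation. -/
def one' : ℕ → ℕ := fun _ => 1


/-! ### Semisimplicity of `V n` over the algebra generated by the `Hop`s -/

/-- Complex conjugation of the coefficients on `ℂ(q)`. -/
noncomputable def conjK : K ≃+* K :=
  IsFractionRing.ringEquivOfRingEquiv (A := Polynomial ℂ) (B := Polynomial ℂ)
    (Polynomial.mapEquiv (starRingAut : ℂ ≃+* ℂ))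

lemma conjK_algebraMap (p : Polynomial ℂ) :
    conjK (algebraMap (Polynomial ℂ) K p)
      = algebraMap (Polynomial ℂ) K (p.map (starRingEnd ℂ)) := by
  unfold conjK
  rw [IsFractionRing.ringEquivOfRingEquiv_algebraMap]
  rfl

lemma conjK_q : conjK q = q := by
  have : q = algebraMap (Polynomial ℂ) K Polynomial.X := by
    simp [q]
  rw [this, conjK_algebraMap, Polynomial.map_X]

lemma poly_aniso {ι : Type*} [Fintype ι] (p : ι → Polynomial ℂ)
    (h : ∑ i, (p i).map (starRingEnd ℂ) * p i = 0) : ∀ i, p i = 0 := by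
  have key : ∀ (r : ℝ) (i : ι), (p i).eval (r : ℂ) = 0 := by
    intro r
    have h1 := congrArg (Polynomial.eval (r : ℂ)) h
    rw [Polynomial.eval_finsetSum] at h1
    have h2 : ∀ i, Polynomial.eval (r : ℂ) ((p i).map (starRingEnd ℂ) * p i)
        = ((Complex.normSq ((p i).eval (r : ℂ)) : ℝ) : ℂ) := by
      intro i
      have h3 : Polynomial.eval (r : ℂ) ((p i).map (starRingEnd ℂ))
          = (starRingEnd ℂ) ((p i).eval (r : ℂ)) := by
        conv_lhs => rw [← Complex.conj_ofReal r]
        rw [Polynomial.eval_map, Polynomial.eval₂_at_apply]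
      rw [Polynomial.eval_mul, h3, Complex.normSq_eq_conj_mul_self]
    simp only [h2, Polynomial.eval_zero] at h1
    rw [← Complex.ofReal_sum, Complex.ofReal_eq_zero] at h1
    rw [Finset.sum_eq_zero_iff_of_nonneg (fun i _ => Complex.normSq_nonneg _)] at h1
    intro i
    exact Complex.normSq_eq_zero.1 (h1 i (Finset.mem_univ i))
  intro i
  apply Polynomial.eq_zero_of_infinite_isRoot
  refine Set.Infinite.mono (s := Set.range (fun r : ℝ => (r : ℂ))) ?_
    (Set.infinite_range_of_injective Complex.ofReal_injective)
  rintro _ ⟨r, rfl⟩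
  exact key r i

lemma K_aniso {ι : Type*} [Fintype ι] (f : ι → K)
    (h : ∑ i, conjK (f i) * f i = 0) : f = 0 := by
  obtain ⟨b, hb⟩ := IsLocalization.exist_integer_multiples_of_finite
    (nonZeroDivisors (Polynomial ℂ)) f
  choose p hp using hb
  have hb0 : algebraMap (Polynomial ℂ) K b ≠ 0 :=
    IsFractionRing.to_map_ne_zero_of_mem_nonZeroDivisors b.2
  have hp' : ∀ i, algebraMap (Polynomial ℂ) K (p i) = algebraMap (Polynomial ℂ) K b * f i := by
    intro i
    rw [hp i, Algebra.smul_def]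
  have h0 : ∀ i, p i = 0 := by
    apply poly_aniso
    apply IsFractionRing.injective (Polynomial ℂ) K
    rw [map_zero, map_sum]
    have : ∀ i, algebraMap (Polynomial ℂ) K ((p i).map (starRingEnd ℂ) * p i)
        = (conjK (algebraMap (Polynomial ℂ) K b) * algebraMap (Polynomial ℂ) K b)
          * (conjK (f i) * f i) := by
      intro i
      rw [map_mul, ← conjK_algebraMap, hp', map_mul]
      ring
    simp only [this, ← Finset.mul_sum, h, mul_zero]
  funext i
  have := hp' i
  rw [h0 i, map_zero] at this
  simpa [hb0] using this.symm

/-- Coordinatewise conjugation. -/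
noncomputable def conjV {n : ℕ} : V n ≃+ V n where
  toFun f := fun γ => conjK (f γ)
  invFun f := fun γ => conjK.symm (f γ)
  left_inv f := by funext γ; simp
  right_inv f := by funext γ; simp
  map_add' f g := by funext γ; simp

/-- The orthogonal complement with respect to the hermitian form. -/
noncomputable def perp {n : ℕ} (N : Submodule K (V n)) : Submodule K (V n) where
  carrier := {w | ∀ v ∈ N, ∑ γ, conjK (v γ) * w γ = 0}
  add_mem' := by
    intro a b ha hb v hv
    simp only [Pi.add_apply, mul_add, Finset.sum_add_distrib, ha v hv, hb v hv, add_zero]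
  zero_mem' := by intro v _; simp
  smul_mem' := by
    intro c a ha v hv
    have : ∀ γ, conjK (v γ) * (c • a) γ = c * (conjK (v γ) * a γ) := by
      intro γ; simp only [Pi.smul_apply, smul_eq_mul]; ring
    simp only [this, ← Finset.mul_sum, ha v hv, mul_zero]

/-- The image of a subspace under conjugation. -/
noncomputable def conjN {n : ℕ} (N : Submodule K (V n)) : Submodule K (V n) where
  carrier := {w | conjV.symm w ∈ N}
  add_mem' := by
    intro a b ha hb
    simp only [Set.mem_ofPred_eq, map_add] at *
    exact N.add_mem ha hb
  zero_mem' := by simp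
  smul_mem' := by
    intro c a ha
    have : conjV.symm (c • a) = conjK.symm c • conjV.symm a := by
      funext γ
      change conjK.symm (c * a γ) = conjK.symm c * conjK.symm (a γ)
      simp
    simp only [Set.mem_ofPred_eq, this] at *
    exact N.smul_mem _ ha

lemma finrank_conjN {n : ℕ} (N : Submodule K (V n)) :
    Module.finrank K (conjN N) = Module.finrank K N := by
  symm
  let j : N ≃+ conjN N :=
    { toFun := fun x => ⟨conjV x.1, by
        change conjV.symm (conjV x.1) ∈ N
        simp⟩
      invFun := fun x => ⟨conjV.symm x.1, x.2⟩
      left_inv := fun x => by simp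
      right_inv := fun x => by simp
      map_add' := fun x y => by ext1; simp }
  refine congrArg Cardinal.toNat (rank_eq_of_equiv_equiv (fun x => conjK x) j conjK.bijective ?_)
  intro r m
  ext1
  funext γ
  change conjK (r * m.1 γ) = conjK r * conjK (m.1 γ)
  simp

lemma isCompl_perp {n : ℕ} (N : Submodule K (V n)) : IsCompl N (perp N) := by
  have hdis : N ⊓ perp N = ⊥ := by
    rw [eq_bot_iff]
    rintro x ⟨h1, h2⟩
    exact K_aniso x (h2 x h1)
  let B : LinearMap.BilinForm K (V n) := dotProductBilin K K
  have hB : B.Nondegenerate := by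
    refine ⟨fun x hx => ?_, fun x hx => ?_⟩
    · funext γ
      simpa [B, dotProductBilin] using hx (Pi.single γ 1)
    · funext γ
      simpa [B, dotProductBilin] using hx (Pi.single γ 1)
  have hperp : B.orthogonal (conjN N) = perp N := by
    ext w
    constructor
    · intro h v hv
      have := h (conjV v) (by change conjV.symm (conjV v) ∈ N; simpa using hv)
      exact this
    · intro h v hv
      have := h _ hv
      have e : ∀ γ, conjK (conjV.symm v γ) = v γ := by
        intro γ
        change conjK (conjK.symm (v γ)) = v γ
        simp
      simp only [e] at this
      exact this
  have hr := LinearMap.BilinForm.finrank_orthogonal hB (conjN N)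
  rw [hperp, finrank_conjN] at hr
  have hle := Submodule.finrank_le N
  rw [isCompl_iff, disjoint_iff, codisjoint_iff]
  refine ⟨hdis, ?_⟩
  apply Submodule.eq_top_of_finrank_eq
  have h3 := Submodule.finrank_sup_add_finrank_inf_eq N (perp N)
  rw [hdis, finrank_bot] at h3
  omega

/-- Swapping the entries `i` and `i+1` of a sequence. -/
def sw {n : ℕ} (i j : Fin n) (γ : Fin n → Fin 2) : Fin n → Fin 2 :=
  fun k => γ (Equiv.swap i j k)

lemma sw_sw {n : ℕ} (i j : Fin n) (γ : Fin n → Fin 2) : sw i j (sw i j γ) = γ := by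
  funext k; simp [sw]

lemma sw_left {n : ℕ} (i j : Fin n) (γ : Fin n → Fin 2) : sw i j γ i = γ j := by simp [sw]

lemma sw_right {n : ℕ} (i j : Fin n) (γ : Fin n → Fin 2) : sw i j γ j = γ i := by simp [sw]

lemma sw_of_ne {n : ℕ} {i j k : Fin n} (γ : Fin n → Fin 2) (h1 : k ≠ i) (h2 : k ≠ j) :
    sw i j γ k = γ k := by simp [sw, Equiv.swap_apply_of_ne_of_ne h1 h2]

/-- The diagonal coefficient of `Hop`. -/
noncomputable def hd (x y : Fin 2) : K :=
  if x = 0 ∧ y = 0 then q⁻¹ else if x = 1 ∧ y = 1 then -q else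
    if x = 0 ∧ y = 1 then 0 else q⁻¹ - q

/-- The off-diagonal coefficient of `Hop`. -/
noncomputable def ho (x y : Fin 2) : K := if x = y then 0 else 1

lemma Hop_apply {n : ℕ} (i : ℕ) (hi : i + 1 < n) (f : V n) (γ : Fin n → Fin 2) :
    Hop n i hi f γ = hd (γ ⟨i, by omega⟩) (γ ⟨i + 1, hi⟩) * f γ
      + ho (γ ⟨i, by omega⟩) (γ ⟨i + 1, hi⟩) * f (sw ⟨i, by omega⟩ ⟨i + 1, hi⟩ γ) := by
  change (if _ then _ else _) = _
  unfold hd ho sw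
  generalize γ ⟨i, by omega⟩ = x
  generalize γ ⟨i + 1, hi⟩ = y
  fin_cases x <;> fin_cases y <;> simp

lemma conjK_hd (x y : Fin 2) : conjK (hd x y) = hd x y := by
  unfold hd
  split_ifs <;> simp [conjK_q]

lemma Hop_symm {n : ℕ} (i : ℕ) (hi : i + 1 < n) (v w : V n) :
    ∑ γ, conjK (v γ) * Hop n i hi w γ = ∑ γ, conjK (Hop n i hi v γ) * w γ := by
  simp only [Hop_apply, mul_add, map_add, add_mul, Finset.sum_add_distrib]
  congr 1
  · refine Finset.sum_congr rfl fun γ _ => ?_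
    rw [map_mul, conjK_hd]; ring
  · let s : (Fin n → Fin 2) ≃ (Fin n → Fin 2) :=
      ⟨sw ⟨i, by omega⟩ ⟨i + 1, hi⟩, sw ⟨i, by omega⟩ ⟨i + 1, hi⟩, sw_sw _ _, sw_sw _ _⟩
    rw [← Equiv.sum_comp s]
    refine Finset.sum_congr rfl fun γ _ => ?_
    change conjK (v (sw _ _ γ)) * (ho (sw _ _ γ _) (sw _ _ γ _) * w (sw _ _ (sw _ _ γ))) = _
    rw [sw_sw, sw_left, sw_right, map_mul]
    have : ho (γ ⟨i + 1, hi⟩) (γ ⟨i, by omega⟩) = conjK (ho (γ ⟨i, by omega⟩) (γ ⟨i + 1, hi⟩)) := by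
      unfold ho
      split_ifs <;> simp_all
    rw [this]; ring

/-- The algebra generated by the `Hop`s. -/
noncomputable abbrev HA (n : ℕ) : Subalgebra K (Module.End K (V n)) :=
  Algebra.adjoin K {X : Module.End K (V n) | ∃ (i : ℕ) (hi : i + 1 < n), X = Hop n i hi}

lemma Hop_mem {n : ℕ} (i : ℕ) (hi : i + 1 < n) : Hop n i hi ∈ HA n :=
  Algebra.subset_adjoin ⟨i, hi, rfl⟩

lemma HA_stable {n : ℕ} (N : Submodule K (V n))
    (h : ∀ i hi, ∀ v ∈ N, Hop n i hi v ∈ N) (Y : Module.End K (V n)) (hY : Y ∈ HA n) :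
    ∀ v ∈ N, Y v ∈ N := by
  induction hY using Algebra.adjoin_induction with
  | mem x hx => obtain ⟨i, hi, rfl⟩ := hx; exact h i hi
  | algebraMap r => intro v hv; exact N.smul_mem r hv
  | add x y _ _ h1 h2 => intro v hv; exact N.add_mem (h1 v hv) (h2 v hv)
  | mul x y _ _ h1 h2 => intro v hv; exact h1 _ (h2 v hv)

lemma HA_smul {n : ℕ} (a : HA n) (v : V n) : a • v = a.1 v := rfl

instance HA_semisimple (n : ℕ) : IsSemisimpleModule (HA n) (V n) := by
  rw [isSemisimpleModule_iff]
  refine ⟨fun N => ?_⟩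
  let N0 : Submodule K (V n) :=
    { carrier := N, add_mem' := N.add_mem, zero_mem' := N.zero_mem
      smul_mem' := fun c v hv => by
        have := N.smul_mem (algebraMap K (HA n) c) hv
        exact this }
  let N1 : Submodule (HA n) (V n) :=
    { carrier := perp N0, add_mem' := (perp N0).add_mem, zero_mem' := (perp N0).zero_mem
      smul_mem' := fun a v hv => by
        refine HA_stable (perp N0) ?_ a.1 a.2 v hv
        intro i hi w hw u hu
        rw [Hop_symm]
        exact hw _ (N.smul_mem (⟨_, Hop_mem i hi⟩ : HA n) hu) }
  refine ⟨N1, ?_⟩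
  have hc := isCompl_perp N0
  rw [isCompl_iff, Submodule.disjoint_def, Submodule.codisjoint_iff_exists_add_eq] at hc ⊢
  exact hc

lemma double_commutant {n : ℕ} (T : Module.End K (V n))
    (h : ∀ X : Module.End K (V n), (∀ i hi, X * Hop n i hi = Hop n i hi * X) →
      T * X = X * T) : T ∈ HA n := by
  let f : Module.End (Module.End (HA n) (V n)) (V n) :=
    { toFun := T
      map_add' := T.map_add
      map_smul' := fun X v => by
        let X' : Module.End K (V n) :=
          { toFun := X, map_add' := X.map_add
            map_smul' := fun c v => X.map_smul (algebraMap K (HA n) c) v }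
        have := h X' (fun i hi => by
          refine LinearMap.ext fun w => ?_
          exact X.map_smul (⟨_, Hop_mem i hi⟩ : HA n) w)
        exact congrArg (fun Z : Module.End K (V n) => Z v) this }
  obtain ⟨r, hr⟩ := jacobson_density (R := HA n) f
    (Finset.univ.image (fun γ : Fin n → Fin 2 => (Pi.single γ 1 : V n)))
  have : T = r.1 := by
    apply (Pi.basisFun K (Fin n → Fin 2)).ext
    intro γ
    rw [Pi.basisFun_apply]
    exact hr _ (Finset.mem_image_of_mem _ (Finset.mem_univ γ))
  rw [this]
  exact r.2

/-! ### The actions of `E` and `F` commute with the `Hop`s -/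

lemma sw_comm {n : ℕ} (i j : Fin n) (γ : Fin n → Fin 2) : sw i j γ = sw j i γ := by
  unfold sw; rw [Equiv.swap_comm]

lemma sw_eq_self {n : ℕ} {i j : Fin n} {γ : Fin n → Fin 2} (h : γ i = γ j) : sw i j γ = γ := by
  funext k
  by_cases h1 : k = i
  · subst h1; rw [sw_left, h]
  by_cases h2 : k = j
  · subst h2; rw [sw_right, h]
  rw [sw_of_ne _ h1 h2]

lemma sw_update {n : ℕ} (i j k : Fin n) (γ : Fin n → Fin 2) (b : Fin 2) :
    sw i j (Function.update γ k b) = Function.update (sw i j γ) (Equiv.swap i j k) b := by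
  funext l
  by_cases h : l = Equiv.swap i j k
  · subst h; simp [sw]
  · have : Equiv.swap i j l ≠ k := by
      rintro rfl; simp at h
    simp [sw, h, this]

lemma sw_invariant {n : ℕ} (P : (Fin n → Fin 2) → Prop) (d : ℕ) : ∀ (i j : Fin n),
    j.val = i.val + d →
    (∀ (m : ℕ) (hm : m + 1 < n), i.val ≤ m → m + 1 ≤ j.val → ∀ γ, P γ →
      P (sw ⟨m, by omega⟩ ⟨m + 1, hm⟩ γ)) → ∀ γ, P γ → P (sw i j γ) := by
  induction d with
  | zero =>
    intro i j hij h γ hγ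
    have : i = j := Fin.ext (by omega)
    subst this
    rwa [sw_eq_self rfl]
  | succ d ih =>
    intro i j hij h γ hγ
    have hj := j.2
    by_cases hd : d = 0
    · have := h i.val (by omega) le_rfl (by omega) γ hγ
      have e : (⟨i.val + 1, by omega⟩ : Fin n) = j := Fin.ext (by simp; omega)
      rw [e] at this
      exact this
    · let j' : Fin n := ⟨i.val + d, by omega⟩
      have ej : (⟨j'.val + 1, by simp [j']; omega⟩ : Fin n) = j := Fin.ext (by simp [j']; omega)
      have hs : ∀ γ, P γ → P (sw j' j γ) := by
        intro γ hγ
        have := h j'.val (by simp [j']; omega) (by simp [j']) (by simp [j']; omega) γ hγ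
        rw [ej] at this
        exact this
      have h1 := hs _ (ih i j' rfl (fun m hm h1 h2 => h m hm h1 (by simp [j'] at h2; omega)) _
        (hs γ hγ))
      have e : sw j' j (sw i j' (sw j' j γ)) = sw i j γ := by
        have := Equiv.swap_mul_swap_mul_swap (x := i) (y := j') (z := j)
          (by intro h; have := congrArg Fin.val h; simp [j'] at this; omega)
          (by intro h; have := congrArg Fin.val h; omega)
        funext k
        have h2 := congrArg (fun e : Equiv.Perm (Fin n) => γ (e k)) this
        rw [Equiv.swap_comm j i] at h2
        exact h2
      rwa [e] at h1

lemma onesBefore_succ {n : ℕ} (γ : Fin n → Fin 2) (m : ℕ) (hm : m + 1 < n) :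
    onesBefore γ ⟨m + 1, hm⟩ = onesBefore γ ⟨m, by omega⟩
      + if γ ⟨m, by omega⟩ = 1 then 1 else 0 := by
  unfold onesBefore
  split_ifs with h
  · rw [← Finset.card_insert_of_notMem (a := (⟨m, by omega⟩ : Fin n)) (by simp)]
    congr 1
    ext k
    simp only [Finset.mem_filter, Finset.mem_univ, true_and, Finset.mem_insert, Fin.lt_def,
      Fin.ext_iff]
    constructor
    · rintro ⟨h1, h2⟩
      by_cases h3 : k.val = m
      · exact Or.inl h3
      · exact Or.inr ⟨by omega, h2⟩
    · rintro (h1 | ⟨h1, h2⟩)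
      · have : k = ⟨m, by omega⟩ := Fin.ext h1
        exact ⟨by omega, by rw [this]; exact congrArg Fin.val h⟩
      · exact ⟨by omega, h2⟩
  · rw [add_zero]
    congr 1
    ext k
    simp only [Finset.mem_filter, Finset.mem_univ, true_and, Fin.lt_def]
    constructor
    · rintro ⟨h1, h2⟩
      refine ⟨?_, h2⟩
      by_contra h3
      have : k = ⟨m, by omega⟩ := Fin.ext (by simp; omega)
      rw [this] at h2
      exact h h2
    · rintro ⟨h1, h2⟩
      exact ⟨by omega, h2⟩

lemma onesBefore_sw {n : ℕ} (γ : Fin n → Fin 2) (m : ℕ) (hm : m + 1 < n) (k : Fin n)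
    (hk : k.val ≠ m + 1) :
    onesBefore (sw ⟨m, by omega⟩ ⟨m + 1, hm⟩ γ) k = onesBefore γ k := by
  unfold onesBefore
  apply Finset.card_equiv (Equiv.swap (⟨m, by omega⟩ : Fin n) ⟨m + 1, hm⟩)
  intro l
  simp only [Finset.mem_filter, Finset.mem_univ, true_and]
  have : l < k ↔ Equiv.swap (⟨m, by omega⟩ : Fin n) ⟨m + 1, hm⟩ l < k := by
    rw [Equiv.swap_apply_def]
    split_ifs with h1 h2
    · subst h1; simp only [Fin.lt_def]; omega
    · subst h2; simp only [Fin.lt_def]; omega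
    · rfl
  rw [this]
  rfl

/-- Common form of the operators `Eop` and `Fop`. -/
noncomputable def Gf {n : ℕ} (a b : Fin 2) (c : Fin n → K) (f : V n) : V n := fun γ =>
  ∑ i : Fin n, if γ i = a then (-1 : K) ^ onesBefore γ i * c i * f (Function.update γ i b) else 0

lemma sum_split {n : ℕ} (i j : Fin n) (hij : i ≠ j) (g : Fin n → K) :
    ∑ k, g k = g i + g j + ∑ k ∈ (Finset.univ.erase i).erase j, g k := by
  rw [← Finset.add_sum_erase _ _ (Finset.mem_univ i),
    ← Finset.add_sum_erase _ _ (Finset.mem_erase.2 ⟨hij.symm, Finset.mem_univ j⟩), add_assoc]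

lemma q_ne_zero : q ≠ 0 := RatFunc.X_ne_zero

lemma Gf_comm {n : ℕ} (m : ℕ) (hm : m + 1 < n) (a b : Fin 2) (hab : a ≠ b) (c : Fin n → K)
    (hc : c ⟨m + 1, hm⟩ = q * c ⟨m, by omega⟩) (f : V n) :
    Gf a b c (Hop n m hm f) = Hop n m hm (Gf a b c f) := by
  funext γ
  rw [Hop_apply]
  simp only [Gf]
  have hij : (⟨m, by omega⟩ : Fin n) ≠ ⟨m + 1, hm⟩ := by simp [Fin.ext_iff]
  rw [sum_split _ _ hij, sum_split _ _ hij, sum_split _ _ hij]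
  simp only [Hop_apply, onesBefore_succ, sw_update, hc]
  rw [onesBefore_sw γ m hm ⟨m, by omega⟩ (by simp)]
  have hrest : ∀ k ∈ (Finset.univ.erase (⟨m, by omega⟩ : Fin n)).erase ⟨m + 1, hm⟩,
      k ≠ ⟨m, by omega⟩ ∧ k ≠ ⟨m + 1, hm⟩ := by
    intro k hk
    simp only [Finset.mem_erase, Finset.mem_univ, and_true] at hk
    exact ⟨hk.2, hk.1⟩
  generalize hi : (⟨m, by omega⟩ : Fin n) = i at *
  generalize hj : (⟨m + 1, hm⟩ : Fin n) = j at *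
  have hR : ∀ k ∈ (Finset.univ.erase i).erase j,
      (if γ k = a then (-1 : K) ^ onesBefore γ k * c k *
        (hd (Function.update γ k b i) (Function.update γ k b j) * f (Function.update γ k b) +
          ho (Function.update γ k b i) (Function.update γ k b j) *
            f (Function.update (sw i j γ) (Equiv.swap i j k) b)) else 0)
      = hd (γ i) (γ j) * (if γ k = a then (-1 : K) ^ onesBefore γ k * c k *
          f (Function.update γ k b) else 0)
        + ho (γ i) (γ j) * (if sw i j γ k = a then (-1 : K) ^ onesBefore (sw i j γ) k * c k *
          f (Function.update (sw i j γ) k b) else 0) := by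
    intro k hk
    obtain ⟨h1, h2⟩ := hrest k hk
    rw [sw_of_ne _ h1 h2, Equiv.swap_apply_of_ne_of_ne h1 h2,
      Function.update_of_ne h1.symm, Function.update_of_ne h2.symm]
    have : onesBefore (sw i j γ) k = onesBefore γ k := by
      have := onesBefore_sw γ m hm k (by
        intro h; apply h2; rw [← hj]; exact Fin.ext h)
      rw [hi, hj] at this
      exact this
    rw [this]
    split_ifs <;> ring
  rw [Finset.sum_congr rfl hR, Finset.sum_add_distrib, ← Finset.mul_sum, ← Finset.mul_sum]
  generalize (∑ k ∈ (Finset.univ.erase i).erase j, if γ k = a then (-1 : K) ^ onesBefore γ k * c k *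
          f (Function.update γ k b) else 0) = S1
  generalize (∑ k ∈ (Finset.univ.erase i).erase j, if sw i j γ k = a then
     (-1 : K) ^ onesBefore (sw i j γ) k * c k * f (Function.update (sw i j γ) k b) else 0) = S2
  rw [Equiv.swap_apply_left, Equiv.swap_apply_right, Function.update_self, Function.update_self,
    Function.update_of_ne hij, Function.update_of_ne hij.symm, sw_left, sw_right]
  have e1 : γ i = γ j → sw i j γ = γ := sw_eq_self
  have e2 : γ j = b → Function.update (sw i j γ) j b = Function.update γ i b := by
    intro h
    have := sw_update i j i γ b
    rw [Equiv.swap_apply_left] at this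
    rw [← this]
    apply sw_eq_self
    rw [Function.update_self, Function.update_of_ne hij.symm, h]
  have e3 : γ i = b → Function.update (sw i j γ) i b = Function.update γ j b := by
    intro h
    have := sw_update i j j γ b
    rw [Equiv.swap_apply_right] at this
    rw [← this]
    apply sw_eq_self
    rw [Function.update_self, Function.update_of_ne hij, h]
  have hq := q_ne_zero
  generalize γ i = x at *
  generalize γ j = y at *
  fin_cases a <;> fin_cases b <;> fin_cases x <;> fin_cases y <;>
    simp [hd, ho] at * <;> (try simp only [e1, e2, e3, pow_succ]) <;> field_simp <;> ring

lemma Fop_eq {n : ℕ} (f : V n) : Fop one' n f = Gf 1 0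
    (fun i => q ^ (∑ j ∈ Finset.univ.filter (fun j : Fin n => j < i), one' j)) f := rfl

lemma Eop_eq {n : ℕ} (f : V n) : Eop one' n f = Gf 0 1
    (fun i => qnum (one' i) *
      q ^ (-((∑ j ∈ Finset.univ.filter (fun j : Fin n => i < j), one' j : ℕ) : ℤ))) f := by
  funext γ
  change ∑ i : Fin n, _ = ∑ i : Fin n, _
  refine Finset.sum_congr rfl fun i _ => ?_
  simp only [mul_assoc]

lemma Fop_comm {n : ℕ} (m : ℕ) (hm : m + 1 < n) (f : V n) :
    Fop one' n (Hop n m hm f) = Hop n m hm (Fop one' n f) := by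
  rw [Fop_eq, Fop_eq]
  apply Gf_comm _ _ _ _ (by decide)
  simp only [one', Finset.sum_const, smul_eq_mul, mul_one, Finset.filter_gt_eq_Iio, Fin.card_Iio]
  rw [pow_succ, mul_comm]

lemma Eop_comm {n : ℕ} (m : ℕ) (hm : m + 1 < n) (f : V n) :
    Eop one' n (Hop n m hm f) = Hop n m hm (Eop one' n f) := by
  rw [Eop_eq, Eop_eq]
  apply Gf_comm _ _ _ _ (by decide)
  have e : (Finset.univ.filter (fun j : Fin n => (⟨m, by omega⟩ : Fin n) < j)).card
      = (Finset.univ.filter (fun j : Fin n => (⟨m + 1, hm⟩ : Fin n) < j)).card + 1 := by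
    simp only [Finset.filter_lt_eq_Ioi, Fin.card_Ioi]
    omega
  simp only [one', Finset.sum_const, smul_eq_mul, mul_one, e]
  push_cast
  rw [neg_add, zpow_add₀ q_ne_zero]
  have := q_ne_zero
  simp only [zpow_neg_one]
  field_simp

/-! ### The commutant of the `Hop`s -/

lemma q_pow_inj {k l : ℕ} (h : q ^ k = q ^ l) : k = l := by
  have hq : q = algebraMap (Polynomial ℂ) K Polynomial.X := by simp [q]
  rw [hq, ← map_pow, ← map_pow] at h
  have := IsFractionRing.injective (Polynomial ℂ) K h
  simpa using congrArg Polynomial.natDegree this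

lemma q_sq_add_one : q * q + 1 ≠ 0 := by
  intro h
  have := K_aniso (![q, 1] : Fin 2 → K) (by simpa [conjK_q] using h)
  have := congrFun this 1
  simp at this

lemma qnum_one : qnum 1 ≠ 0 := by
  have h : q - q⁻¹ ≠ 0 := by
    intro h
    have h1 : q ^ 2 = q ^ 0 := by
      have := q_ne_zero
      field_simp at h
      linear_combination h
    have := q_pow_inj h1
    omega
  simp [qnum, h]

lemma Gf_single {n : ℕ} (a b : Fin 2) (c : Fin n → K) (w : V n) (γ : Fin n → Fin 2) (p : Fin n)
    (hp : γ p = a) (h : ∀ i, i ≠ p → γ i = a → w (Function.update γ i b) = 0) :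
    Gf a b c w γ = (-1 : K) ^ onesBefore γ p * c p * w (Function.update γ p b) := by
  unfold Gf
  rw [Finset.sum_eq_single p]
  · rw [if_pos hp]
  · intro i _ hi
    split_ifs with h1
    · rw [h i hi h1, mul_zero]
    · rfl
  · intro h; exact absurd (Finset.mem_univ p) h

lemma eb_self {n : ℕ} (η : Fin n → Fin 2) : eb η η = 1 := by simp [eb]

lemma eb_ne {n : ℕ} {η γ : Fin n → Fin 2} (p : Fin n) (h : γ p ≠ η p) : eb η γ = 0 := by
  have : γ ≠ η := by rintro rfl; exact h rfl
  simp [eb, this]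

lemma Gf_eb_ne_zero {n : ℕ} (a b : Fin 2) (hab : a ≠ b) (c : Fin n → K) (hc : ∀ i, c i ≠ 0)
    (η : Fin n → Fin 2) (p : Fin n) (hp : η p = b) :
    Gf a b c (eb η) (Function.update η p a) ≠ 0 := by
  rw [Gf_single a b c _ _ p (by simp)]
  · have : Function.update (Function.update η p a) p b = η := by
      rw [Function.update_idem, ← hp, Function.update_eq_self]
    rw [this, eb_self]
    simp [hc]
  · intro i hi _
    apply eb_ne p
    rw [Function.update_of_ne hi.symm, Function.update_self, hp]
    exact hab

lemma Gf_eb_zero {n : ℕ} (a b : Fin 2) (c : Fin n → K)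
    (η γ : Fin n → Fin 2) (r : Fin n) (h1 : γ r ≠ a) (h2 : γ r ≠ η r) :
    Gf a b c (eb η) γ = 0 := by
  unfold Gf
  apply Finset.sum_eq_zero
  intro i _
  split_ifs with h
  · have hi : r ≠ i := by rintro rfl; exact h1 h
    rw [eb_ne (η := η) r (by rw [Function.update_of_ne hi]; exact h2), mul_zero]
  · rfl

lemma cF_ne {n : ℕ} (i : Fin n) :
    q ^ (∑ j ∈ Finset.univ.filter (fun j : Fin n => j < i), one' j) ≠ 0 :=
  pow_ne_zero _ q_ne_zero

lemma cE_ne {n : ℕ} (i : Fin n) : qnum (one' i) *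
      q ^ (-((∑ j ∈ Finset.univ.filter (fun j : Fin n => i < j), one' j : ℕ) : ℤ)) ≠ 0 :=
  mul_ne_zero qnum_one (zpow_ne_zero _ q_ne_zero)

lemma F_eb_ne_zero {n : ℕ} (η : Fin n → Fin 2) (p : Fin n) (hp : η p = 0) :
    Fop one' n (eb η) (Function.update η p 1) ≠ 0 := by
  rw [Fop_eq]
  exact Gf_eb_ne_zero 1 0 (by decide) _ cF_ne η p hp

lemma E_eb_ne_zero {n : ℕ} (η : Fin n → Fin 2) (p : Fin n) (hp : η p = 1) :
    Eop one' n (eb η) (Function.update η p 0) ≠ 0 := by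
  rw [Eop_eq]
  exact Gf_eb_ne_zero 0 1 (by decide) _ cE_ne η p hp

lemma F_eb_zero {n : ℕ} (η γ : Fin n → Fin 2) (r : Fin n) (h1 : γ r = 0) (h2 : η r = 1) :
    Fop one' n (eb η) γ = 0 := by
  rw [Fop_eq]
  exact Gf_eb_zero _ _ _ _ _ r (by rw [h1]; decide) (by rw [h1, h2]; decide)

lemma E_eb_zero {n : ℕ} (η γ : Fin n → Fin 2) (r : Fin n) (h1 : γ r = 1) (h2 : η r = 0) :
    Eop one' n (eb η) γ = 0 := by
  rw [Eop_eq]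
  exact Gf_eb_zero _ _ _ _ _ r (by rw [h1]; decide) (by rw [h1, h2]; decide)

lemma FE_eb_ne_zero {n : ℕ} (η : Fin n → Fin 2) (p r : Fin n) (hp : η p = 0) (hr : η r = 1) :
    Fop one' n (Eop one' n (eb η)) (Function.update (Function.update η r 0) p 1) ≠ 0 := by
  have hpr : p ≠ r := by rintro rfl; rw [hp] at hr; exact absurd hr (by decide)
  rw [Fop_eq, Gf_single 1 0 _ _ _ p (by simp)]
  · have e : Function.update (Function.update (Function.update η r 0) p 1) p 0
        = Function.update η r 0 := by
      rw [Function.update_idem]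
      have : (0 : Fin 2) = Function.update η r 0 p := by
        rw [Function.update_of_ne hpr, hp]
      exact Function.update_eq_self_iff.2 this
    rw [e]
    exact mul_ne_zero (mul_ne_zero (by simp) (cF_ne p)) (E_eb_ne_zero η r hr)
  · intro i hi _
    apply E_eb_zero η _ p _ hp
    rw [Function.update_of_ne hi.symm, Function.update_self]

/-- Vectors satisfying the same eigenvector equations as `eb η`. -/
noncomputable def Sol {n : ℕ} (η : Fin n → Fin 2) : Submodule K (V n) where
  carrier := {u | ∀ (m : ℕ) (hm : m + 1 < n), η ⟨m, by omega⟩ = η ⟨m + 1, hm⟩ →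
    Hop n m hm u = hd (η ⟨m, by omega⟩) (η ⟨m, by omega⟩) • u}
  add_mem' := by
    intro x y hx hy m hm h
    rw [map_add, hx m hm h, hy m hm h, smul_add]
  zero_mem' := by intro m hm h; simp
  smul_mem' := by
    intro c x hx m hm h
    rw [map_smul, hx m hm h, smul_comm]

lemma Hop_eb_same {n : ℕ} (η : Fin n → Fin 2) (m : ℕ) (hm : m + 1 < n)
    (h : η ⟨m, by omega⟩ = η ⟨m + 1, hm⟩) :
    Hop n m hm (eb η) = hd (η ⟨m, by omega⟩) (η ⟨m, by omega⟩) • eb η := by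
  funext γ
  rw [Hop_apply, Pi.smul_apply, smul_eq_mul]
  by_cases hγ : γ = η
  · subst hγ
    rw [← h]
    simp [ho]
  · have h1 : eb η γ = 0 := by simp [eb, hγ]
    have h2 : eb η (sw ⟨m, by omega⟩ ⟨m + 1, hm⟩ γ) = 0 := by
      have : sw ⟨m, by omega⟩ ⟨m + 1, hm⟩ γ ≠ η := by
        intro h3
        apply hγ
        rw [← sw_sw ⟨m, by omega⟩ ⟨m + 1, hm⟩ γ, h3, sw_eq_self h]
      simp [eb, this]
    rw [h1, h2]; simp

lemma mem_Sol {n : ℕ} (η : Fin n → Fin 2) (X : Module.End K (V n))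
    (hX : ∀ i hi, X * Hop n i hi = Hop n i hi * X) : X (eb η) ∈ Sol η := by
  intro m hm h
  have := congrArg (fun Z : Module.End K (V n) => Z (eb η)) (hX m hm)
  change X (Hop n m hm (eb η)) = Hop n m hm (X (eb η)) at this
  rw [← this, Hop_eb_same η m hm h, map_smul]

lemma Sol_swap {n : ℕ} {η : Fin n → Fin 2} (hη : Monotone η) {u : V n} (hu : u ∈ Sol η)
    (i j : Fin n) (hij : η i = η j) (γ : Fin n → Fin 2) (h : u γ = 0) : u (sw i j γ) = 0 := by
  wlog hle : i ≤ j generalizing i j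
  · rw [sw_comm]
    exact this j i hij.symm (le_of_not_ge hle)
  refine sw_invariant (fun γ => u γ = 0) (j.val - i.val) i j (by omega) ?_ γ h
  intro m hm h1 h2 δ hδ
  have e : η ⟨m, by omega⟩ = η ⟨m + 1, hm⟩ := by
    apply le_antisymm
    · apply hη; simp
    · calc η ⟨m + 1, hm⟩ ≤ η j := hη h2
        _ = η i := hij.symm
        _ ≤ _ := hη h1
  have := congrFun (hu m hm e) δ
  rw [Hop_apply, Pi.smul_apply, hδ] at this
  by_cases h3 : δ ⟨m, by omega⟩ = δ ⟨m + 1, hm⟩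
  · change u _ = 0
    rw [sw_eq_self h3, hδ]
  · simpa [ho, h3] using this

lemma Sol_two {n : ℕ} {η : Fin n → Fin 2} (hη : Monotone η) {u : V n} (hu : u ∈ Sol η)
    (i j : Fin n) (hne : i ≠ j) (hij : η i = η j) (γ : Fin n → Fin 2) (h1 : γ i ≠ η i)
    (h2 : γ j ≠ η i) : u γ = 0 := by
  wlog hle : i ≤ j generalizing i j
  · exact this j i hne.symm hij.symm (by rwa [← hij]) (by rwa [← hij]) (le_of_not_ge hle)
  have hlt : i.val < j.val := by
    have := lt_of_le_of_ne hle hne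
    exact this
  have hi1 : i.val + 1 < n := by omega
  set i' : Fin n := ⟨i.val + 1, hi1⟩ with hi'
  have ei : η i = η i' := by
    apply le_antisymm
    · apply hη; simp [Fin.le_def, hi']
    · rw [hij]; apply hη; simp only [Fin.le_def, hi']; omega
  have hne' : i ≠ i' := by simp [Fin.ext_iff, hi']
  rw [← sw_sw i' j γ]
  apply Sol_swap hη hu i' j (by rw [← ei, hij])
  generalize hδ : sw i' j γ = δ
  have d1 : δ i ≠ η i := by
    rw [← hδ, sw_of_ne _ hne' hne]; exact h1
  have d2 : δ i' ≠ η i := by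
    rw [← hδ, sw_left]; exact h2
  have := congrFun (hu i.val hi1 ei) δ
  rw [Hop_apply, Pi.smul_apply] at this
  change hd (δ i) (δ i') * _ + ho (δ i) (δ i') * _ = hd (η i) (η i) * _ at this
  have hq := q_ne_zero
  have hq2 := q_sq_add_one
  generalize δ i = x at *
  generalize δ i' = y at *
  generalize η i = z at *
  have key : (q * q + 1) * u δ = 0 := by
    fin_cases x <;> fin_cases y <;> fin_cases z <;> simp [hd, ho] at *
    · have h : (q * q + 1) * u δ = 0 := by field_simp at this; linear_combination this
      simpa using h
    · have h : (q * q + 1) * u δ = 0 := by field_simp at this; linear_combination -this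
      simpa using h
  simpa [hq2] using key

lemma fin2_cases (x : Fin 2) : x = 0 ∨ x = 1 := by fin_cases x <;> simp

lemma Sol_zero {n : ℕ} {η : Fin n → Fin 2} (hη : Monotone η) {u : V n} (hu : u ∈ Sol η)
    (h0 : u η = 0)
    (h1 : ∀ p, η p = 0 → u (Function.update η p 1) = 0)
    (h2 : ∀ r, η r = 1 → u (Function.update η r 0) = 0)
    (h3 : ∀ p r, η p = 0 → η r = 1 → u (Function.update (Function.update η r 0) p 1) = 0) :
    u = 0 := by
  funext γ
  change u γ = 0
  by_contra hne
  have two : ∀ i j, η i = η j → γ i ≠ η i → γ j ≠ η j → i = j := by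
    intro i j hij hi hj
    by_contra hne'
    exact hne (Sol_two hη hu i j hne' hij γ hi (by rwa [hij]))
  by_cases hA : ∃ p, η p = 0 ∧ γ p ≠ η p
  · obtain ⟨p, hp, hp'⟩ := hA
    have hp1 : γ p = 1 := by
      rcases fin2_cases (γ p) with h | h
      · rw [h, hp] at hp'; exact absurd rfl hp'
      · exact h
    by_cases hB : ∃ r, η r = 1 ∧ γ r ≠ η r
    · obtain ⟨r, hr, hr'⟩ := hB
      have hr1 : γ r = 0 := by
        rcases fin2_cases (γ r) with h | h
        · exact h
        · rw [h, hr] at hr'; exact absurd rfl hr'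
      apply hne
      rw [← h3 p r hp hr]
      congr 1
      funext k
      by_cases k1 : k = p
      · subst k1; rw [Function.update_self, hp1]
      by_cases k2 : k = r
      · subst k2; rw [Function.update_of_ne k1, Function.update_self, hr1]
      rw [Function.update_of_ne k1, Function.update_of_ne k2]
      by_contra hk
      rcases fin2_cases (η k) with h | h
      · exact k1 (two k p (by rw [h, hp]) hk hp')
      · exact k2 (two k r (by rw [h, hr]) hk hr')
    · apply hne
      rw [← h1 p hp]
      congr 1
      funext k
      by_cases k1 : k = p
      · subst k1; rw [Function.update_self, hp1]
      rw [Function.update_of_ne k1]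
      by_contra hk
      rcases fin2_cases (η k) with h | h
      · exact k1 (two k p (by rw [h, hp]) hk hp')
      · exact hB ⟨k, h, hk⟩
  · by_cases hB : ∃ r, η r = 1 ∧ γ r ≠ η r
    · obtain ⟨r, hr, hr'⟩ := hB
      have hr1 : γ r = 0 := by
        rcases fin2_cases (γ r) with h | h
        · exact h
        · rw [h, hr] at hr'; exact absurd rfl hr'
      apply hne
      rw [← h2 r hr]
      congr 1
      funext k
      by_cases k2 : k = r
      · subst k2; rw [Function.update_self, hr1]
      rw [Function.update_of_ne k2]
      by_contra hk
      rcases fin2_cases (η k) with h | h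
      · exact hA ⟨k, h, hk⟩
      · exact k2 (two k r (by rw [h, hr]) hk hr')
    · apply hne
      rw [← h0]
      congr 1
      funext k
      by_contra hk
      rcases fin2_cases (η k) with h | h
      · exact hA ⟨k, h, hk⟩
      · exact hB ⟨k, h, hk⟩

lemma kill {n : ℕ} {η : Fin n → Fin 2} {u w : V n} (hu : u ∈ Sol η) (hw : w ∈ Sol η)
    (P : Set (Fin n → Fin 2)) (hP : ∀ γ ∈ P, w γ ≠ 0)
    (hPP : ∀ z ∈ Sol η, ∀ γ ∈ P, ∀ δ ∈ P, z γ = 0 → z δ = 0) :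
    ∃ c : K, ∀ γ ∈ P, (u - c • w) γ = 0 := by
  by_cases h : P.Nonempty
  · obtain ⟨γ, hγ⟩ := h
    refine ⟨u γ / w γ, fun δ hδ => ?_⟩
    apply hPP _ (Submodule.sub_mem _ hu (Submodule.smul_mem _ _ hw)) γ hγ δ hδ
    simp [hP γ hγ]
  · exact ⟨0, fun γ hγ => absurd ⟨γ, hγ⟩ h⟩

lemma swap_one {n : ℕ} (η : Fin n → Fin 2) (p p' : Fin n) (h : η p = η p') (b : Fin 2) :
    sw p p' (Function.update η p b) = Function.update η p' b := by
  rw [sw_update, Equiv.swap_apply_left, sw_eq_self h]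

lemma X_form {n : ℕ} {η : Fin n → Fin 2} (hη : Monotone η) (X : Module.End K (V n))
    (hX : ∀ i hi, X * Hop n i hi = Hop n i hi * X) :
    ∃ c0 c1 c2 c3 : K, X (eb η) = c3 • Fop one' n (Eop one' n (eb η)) + c1 • Fop one' n (eb η)
      + c2 • Eop one' n (eb η) + c0 • eb η := by
  have hE : ∀ i hi, Eop one' n * Hop n i hi = Hop n i hi * Eop one' n := fun i hi =>
    LinearMap.ext fun f => Eop_comm i hi f
  have hF : ∀ i hi, Fop one' n * Hop n i hi = Hop n i hi * Fop one' n := fun i hi =>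
    LinearMap.ext fun f => Fop_comm i hi f
  have hFE : ∀ i hi, (Fop one' n * Eop one' n) * Hop n i hi
      = Hop n i hi * (Fop one' n * Eop one' n) := fun i hi => by
    rw [mul_assoc, hE, ← mul_assoc, hF, mul_assoc]
  have sX := mem_Sol η X hX
  have sE := mem_Sol η _ hE
  have sF := mem_Sol η _ hF
  have sFE : Fop one' n (Eop one' n (eb η)) ∈ Sol η := mem_Sol η _ hFE
  have s1 : eb η ∈ Sol η := mem_Sol η 1 (fun i hi => by simp)
  obtain ⟨c3, h3⟩ := kill sX sFE
    {γ | ∃ p r, η p = 0 ∧ η r = 1 ∧ γ = Function.update (Function.update η r 0) p 1}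
    (by rintro _ ⟨p, r, hp, hr, rfl⟩; exact FE_eb_ne_zero η p r hp hr)
    (by
      rintro z hz _ ⟨p, r, hp, hr, rfl⟩ _ ⟨p', r', hp', hr', rfl⟩ h
      have n1 : ∀ {p r : Fin n}, η p = 0 → η r = 1 → p ≠ r := by
        intro p r hp hr h
        rw [h, hr] at hp
        exact absurd hp (by decide)
      have e1 := Sol_swap hη hz p p' (by rw [hp, hp']) _ h
      rw [swap_one _ p p' (by
        rw [Function.update_of_ne (n1 hp hr), Function.update_of_ne (n1 hp' hr), hp, hp'])] at e1
      rw [Function.update_comm (n1 hp' hr).symm] at e1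
      have e2 := Sol_swap hη hz r r' (by rw [hr, hr']) _ e1
      rw [swap_one _ r r' (by
        rw [Function.update_of_ne (n1 hp' hr).symm, Function.update_of_ne (n1 hp' hr').symm,
          hr, hr'])] at e2
      rwa [Function.update_comm (n1 hp' hr').symm])
  have t3 := Submodule.sub_mem _ sX (Submodule.smul_mem _ c3 sFE)
  obtain ⟨c1, h1⟩ := kill t3 sF
    {γ | ∃ p, η p = 0 ∧ γ = Function.update η p 1}
    (by rintro _ ⟨p, hp, rfl⟩; exact F_eb_ne_zero η p hp)
    (by
      rintro z hz _ ⟨p, hp, rfl⟩ _ ⟨p', hp', rfl⟩ h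
      have e1 := Sol_swap hη hz p p' (by rw [hp, hp']) _ h
      rwa [swap_one _ p p' (by rw [hp, hp'])] at e1)
  have t1 := Submodule.sub_mem _ t3 (Submodule.smul_mem _ c1 sF)
  obtain ⟨c2, h2⟩ := kill t1 sE
    {γ | ∃ p, η p = 1 ∧ γ = Function.update η p 0}
    (by rintro _ ⟨p, hp, rfl⟩; exact E_eb_ne_zero η p hp)
    (by
      rintro z hz _ ⟨p, hp, rfl⟩ _ ⟨p', hp', rfl⟩ h
      have e1 := Sol_swap hη hz p p' (by rw [hp, hp']) _ h
      rwa [swap_one _ p p' (by rw [hp, hp'])] at e1)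
  have t2 := Submodule.sub_mem _ t1 (Submodule.smul_mem _ c2 sE)
  obtain ⟨c0, h0⟩ := kill t2 s1 {η}
    (by rintro _ rfl; rw [eb_self]; exact one_ne_zero)
    (by rintro z hz _ rfl _ rfl h; exact h)
  have t0 := Submodule.sub_mem _ t2 (Submodule.smul_mem _ c0 s1)
  refine ⟨c0, c1, c2, c3, ?_⟩
  have := Sol_zero hη t0 (h0 η rfl) ?_ ?_ ?_
  · have h := sub_eq_zero.1 this
    rw [← h]
    abel
  · intro p hp
    have a := h1 _ ⟨p, hp, rfl⟩
    have b := E_eb_zero η (Function.update η p 1) p (by simp) hp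
    have c : eb η (Function.update η p 1) = 0 := eb_ne p (by simp [hp])
    rw [Pi.sub_apply, Pi.sub_apply, a, Pi.smul_apply, Pi.smul_apply, b, c]
    simp
  · intro p hp
    have a := h2 _ ⟨p, hp, rfl⟩
    have c : eb η (Function.update η p 0) = 0 := eb_ne p (by simp [hp])
    rw [Pi.sub_apply, a, Pi.smul_apply, c]
    simp
  · intro p r hp hr
    have hpr : r ≠ p := by rintro rfl; rw [hp] at hr; exact absurd hr (by decide)
    have a := h3 _ ⟨p, r, hp, hr, rfl⟩
    have b := E_eb_zero η (Function.update (Function.update η r 0) p 1) p (by simp) hp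
    have c : eb η (Function.update (Function.update η r 0) p 1) = 0 := eb_ne p (by simp [hp])
    have d := F_eb_zero η (Function.update (Function.update η r 0) p 1) r (by simp [hpr]) hr
    rw [Pi.sub_apply, Pi.sub_apply, Pi.sub_apply, a, Pi.smul_apply, Pi.smul_apply, Pi.smul_apply,
      b, c, d]
    simp

/-! ### Conclusion -/

lemma Hop_eb_01 {n : ℕ} (δ : Fin n → Fin 2) (m : ℕ) (hm : m + 1 < n)
    (h : δ ⟨m, by omega⟩ ≠ δ ⟨m + 1, hm⟩) :
    eb (sw ⟨m, by omega⟩ ⟨m + 1, hm⟩ δ) = Hop n m hm (eb δ)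
      - hd (δ ⟨m, by omega⟩) (δ ⟨m + 1, hm⟩) • eb δ := by
  funext γ
  rw [Pi.sub_apply, Hop_apply, Pi.smul_apply, smul_eq_mul]
  set i : Fin n := ⟨m, by omega⟩
  set j : Fin n := ⟨m + 1, hm⟩
  have h1 : eb δ (sw i j γ) = eb (sw i j δ) γ := by
    have : sw i j γ = δ ↔ γ = sw i j δ := by
      constructor
      · rintro rfl; rw [sw_sw]
      · rintro rfl; rw [sw_sw]
    simp [eb, this]
  rw [h1]
  by_cases e1 : γ = δ
  · subst e1
    have : ho (γ i) (γ j) = 1 := by simp [ho, h]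
    rw [this]; ring
  · have e2 : eb δ γ = 0 := by simp [eb, e1]
    rw [e2]
    by_cases e3 : γ = sw i j δ
    · subst e3
      have : ho (sw i j δ i) (sw i j δ j) = 1 := by
        rw [sw_left, sw_right]; simp [ho, Ne.symm h]
      rw [this]; ring
    · have e4 : eb (sw i j δ) γ = 0 := by simp [eb, e3]
      rw [e4]; simp

lemma agree_all {n : ℕ} (X Y : Module.End K (V n))
    (hX : ∀ i hi, X * Hop n i hi = Hop n i hi * X)
    (hY : ∀ i hi, Y * Hop n i hi = Hop n i hi * Y) (η : Fin n → Fin 2)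
    (h : X (eb η) = Y (eb η)) (σ : Equiv.Perm (Fin n)) : X (eb (η ∘ σ)) = Y (eb (η ∘ σ)) := by
  have hX' : ∀ i hi f, X (Hop n i hi f) = Hop n i hi (X f) := fun i hi f =>
    congrArg (fun Z : Module.End K (V n) => Z f) (hX i hi)
  have hY' : ∀ i hi f, Y (Hop n i hi f) = Hop n i hi (Y f) := fun i hi f =>
    congrArg (fun Z : Module.End K (V n) => Z f) (hY i hi)
  have adj : ∀ (m : ℕ) (hm : m + 1 < n) (γ : Fin n → Fin 2), X (eb γ) = Y (eb γ) →
      X (eb (sw ⟨m, by omega⟩ ⟨m + 1, hm⟩ γ)) = Y (eb (sw ⟨m, by omega⟩ ⟨m + 1, hm⟩ γ)) := by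
    intro m hm γ hγ
    by_cases e : γ ⟨m, by omega⟩ = γ ⟨m + 1, hm⟩
    · rwa [sw_eq_self e]
    · rw [Hop_eb_01 γ m hm e, map_sub, map_sub, hX', hY', map_smul, map_smul, hγ]
  have sws : ∀ i j : Fin n, ∀ γ, X (eb γ) = Y (eb γ) → X (eb (sw i j γ)) = Y (eb (sw i j γ)) := by
    intro i j γ hγ
    wlog hle : i ≤ j generalizing i j
    · rw [sw_comm]
      exact this j i (le_of_not_ge hle)
    exact sw_invariant (fun γ => X (eb γ) = Y (eb γ)) (j.val - i.val) i j (by omega)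
      (fun m hm _ _ γ hγ => adj m hm γ hγ) γ hγ
  induction σ using Equiv.Perm.swap_induction_on' with
  | one => exact h
  | mul_swap f x y _ ih => exact sws x y _ ih

/-- The number of ones. -/
def ones {n : ℕ} (γ : Fin n → Fin 2) : ℕ := (Finset.univ.filter (fun i => γ i = 1)).card

lemma exists_perm {n : ℕ} (γ δ : Fin n → Fin 2) (h : ones γ = ones δ) :
    ∃ σ : Equiv.Perm (Fin n), γ ∘ σ = δ := by
  have hc : ∀ c : Fin 2, Nonempty ({a // δ a = c} ≃ {b // γ b = c}) := by
    intro c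
    apply Fintype.card_eq.1
    rw [Fintype.card_subtype, Fintype.card_subtype]
    rcases fin2_cases c with rfl | rfl
    · have key : ∀ γ : Fin n → Fin 2,
          (Finset.univ.filter (fun i => γ i = 0)).card + ones γ = n := by
        intro γ
        have := Finset.card_filter_add_card_filter_not (s := (Finset.univ : Finset (Fin n)))
          (fun i => γ i = 0)
        rw [Finset.card_univ, Fintype.card_fin] at this
        have e : Finset.univ.filter (fun i => γ i = 1)
            = Finset.univ.filter (fun i => ¬ γ i = 0) := by
          ext i
          rcases fin2_cases (γ i) with h | h <;> simp [h]
        unfold ones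
        rw [e]
        exact this
      have k1 := key γ
      have k2 := key δ
      omega
    · exact h.symm
  refine ⟨Equiv.ofFiberEquiv (fun c => (hc c).some), ?_⟩
  funext k
  exact Equiv.ofFiberEquiv_map _ k

lemma Kop_apply {n : ℕ} (f : V n) (γ : Fin n → Fin 2) :
    Kop one' n 0 1 f γ = q ^ (ones γ) * f γ := by
  change q ^ (∑ i : Fin n, (if γ i = 0 then (0 : ℤ) * (one' i : ℤ)
    else 0 * ((one' i : ℤ) - 1) + 1)) * f γ = _
  congr 1
  rw [← zpow_natCast]
  congr 1
  unfold ones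
  rw [Finset.card_filter]
  push_cast
  refine Finset.sum_congr rfl fun i _ => ?_
  rcases fin2_cases (γ i) with h | h <;> simp [h]

lemma T_weight {n : ℕ} (T : Module.End K (V n))
    (hK : ∀ c d : ℤ, T * Kop one' n c d = Kop one' n c d * T) (γ δ : Fin n → Fin 2)
    (h : ones γ ≠ ones δ) : T (eb γ) δ = 0 := by
  have h1 : Kop one' n 0 1 (eb γ) = q ^ (ones γ) • eb γ := by
    funext δ
    rw [Kop_apply, Pi.smul_apply, smul_eq_mul]
    by_cases e : δ = γ
    · rw [e]
    · have : eb γ δ = 0 := by simp [eb, e]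
      rw [this]; simp
  have h2 := congrArg (fun Z : Module.End K (V n) => Z (eb γ) δ) (hK 0 1)
  change T (Kop one' n 0 1 (eb γ)) δ = Kop one' n 0 1 (T (eb γ)) δ at h2
  rw [h1, map_smul, Kop_apply, Pi.smul_apply, smul_eq_mul] at h2
  have h3 := mul_eq_mul_right_iff.1 h2
  rcases h3 with h3 | h3
  · exact absurd (q_pow_inj h3) h
  · exact h3

lemma eb_expand {n : ℕ} (f : V n) : f = ∑ δ, f δ • eb δ := by
  funext γ
  rw [Finset.sum_apply]
  simp [eb]

/-!
STATEMENT 7: Super Schur–Weyl duality, surjectivity: every `ℂ(q)`-linear endomorphism of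
`V^{⊗n}` commuting with the actions of `E`, `F` and all `q^h` lies in the unital
subalgebra of `End(V^{⊗n})` generated by `Ȟ_1,…,Ȟ_{n-1}`; i.e. the algebra homomorphism
`H_n → End_{U_q(gl(1|1))}(V^{⊗n})`, `H_i ↦ Ȟ_i`, is surjective.
-/

theorem statement7 (n : ℕ) (T : Module.End K (V n))
    (hE : T * Eop one' n = Eop one' n * T)
    (hF : T * Fop one' n = Fop one' n * T)
    (hK : ∀ c d : ℤ, T * Kop one' n c d = Kop one' n c d * T) :
    T ∈ Algebra.adjoin K {X : Module.End K (V n) | ∃ (i : ℕ) (hi : i + 1 < n), X = Hop n i hi} := by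
  apply double_commutant
  intro X hX
  apply (Pi.basisFun K (Fin n → Fin 2)).ext
  intro γ
  have e : Pi.basisFun K (Fin n → Fin 2) γ = eb γ := by
    funext δ
    simp [eb, Pi.single_apply]
  rw [e]
  change T (X (eb γ)) = X (T (eb γ))
  have hη : Monotone (γ ∘ Tuple.sort γ) := Tuple.monotone_sort γ
  obtain ⟨c0, c1, c2, c3, hc⟩ := X_form hη X hX
  let Y : Module.End K (V n) := c3 • (Fop one' n * Eop one' n) + c1 • Fop one' n
    + c2 • Eop one' n + c0 • 1
  have cE : ∀ i hi, Eop one' n * Hop n i hi = Hop n i hi * Eop one' n := fun i hi =>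
    LinearMap.ext fun f => Eop_comm i hi f
  have cF : ∀ i hi, Fop one' n * Hop n i hi = Hop n i hi * Fop one' n := fun i hi =>
    LinearMap.ext fun f => Fop_comm i hi f
  have hY : ∀ i hi, Y * Hop n i hi = Hop n i hi * Y := by
    intro i hi
    have cFE : (Fop one' n * Eop one' n) * Hop n i hi
        = Hop n i hi * (Fop one' n * Eop one' n) := by
      rw [mul_assoc, cE, ← mul_assoc, cF, mul_assoc]
    simp only [Y, add_mul, mul_add, smul_mul_assoc, mul_smul_comm, cE, cF, cFE, one_mul, mul_one]
  have hTY : T * Y = Y * T := by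
    have cFE : T * (Fop one' n * Eop one' n) = (Fop one' n * Eop one' n) * T := by
      rw [← mul_assoc, hF, mul_assoc, hE, ← mul_assoc]
    simp only [Y, add_mul, mul_add, smul_mul_assoc, mul_smul_comm, hE, hF, cFE, one_mul, mul_one]
  have hag := agree_all X Y hX hY (γ ∘ Tuple.sort γ) hc
  have hag' : ∀ δ, ones γ = ones δ → X (eb δ) = Y (eb δ) := by
    intro δ hδ
    obtain ⟨σ, hσ⟩ := exists_perm γ δ hδ
    have := hag ((Tuple.sort γ)⁻¹ * σ)
    have e2 : (γ ∘ Tuple.sort γ) ∘ ((Tuple.sort γ)⁻¹ * σ : Equiv.Perm (Fin n)) = δ := by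
      rw [← hσ]
      funext k
      simp
    rwa [e2] at this
  have h1 : X (T (eb γ)) = Y (T (eb γ)) := by
    rw [eb_expand (T (eb γ)), map_sum, map_sum]
    refine Finset.sum_congr rfl fun δ _ => ?_
    rw [map_smul, map_smul]
    by_cases hδ : ones γ = ones δ
    · rw [hag' δ hδ]
    · rw [T_weight T hK γ δ hδ, zero_smul, zero_smul]
  rw [h1, hag' γ rfl]
  exact congrArg (fun Z : Module.End K (V n) => Z (eb γ)) hTY
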